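/- Let Λ ⊆ ℝ² be a lattice, Λ* = {m ∈ ℝ² : σ(m,λ) ∈ ℤ for all λ ∈ Λ} its dual with respect to σ, and Ω a measurable fundamental domain for Λ. If F : Ω → M_a(ℂ) is Bochner integrable and for every m ∈ Λ* and every (j,k) ∈ (ZMod a)² one has ∫_Ω e^{−2πi σ(w,m)} tr(F(w) (Tʲ Mᵏ)*) dw = 0, then F = 0 almost everywhere on Ω. -/

import Mathlib

/-!
For fixed `j`, the numbers `tr(A (Tʲ Mᵏ)*)` are the discrete Fourier transform of the `j`-th
generalized diagonal of `A`, so together they determine the matrix `A`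
(`eq_zero_of_trace_mul_star_eq_zero`). It therefore suffices to treat scalar functions `f ∈ L¹(Ω)`
whose Fourier coefficients over `Λ*` vanish (`scalar_coefficients_determine`).

A `ℤ`-basis of `Λ` gives a map `ψ : ℝ² → (ℝ/ℤ)^ι` with fibres the cosets of `Λ`, and the characters
`w ↦ e^{−2πi σ(w,m)}`, `m ∈ Λ*`, include all the pullbacks of the characters of the torus
(`exists_mem_sympDual`). Trigonometric polynomials are uniformly dense, so `f` is orthogonal to
`g ∘ ψ` for every continuous `g`; hence the image under `ψ` of the complex measure `f dw` on `Ω`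
vanishes (`setIntegral_preimage_eq_zero`), that is, `f` has integral zero over `Ω ∩ ψ⁻¹(E)` for
every measurable `E`. For measurable `S ⊆ Ω` the invariant set `S + Λ` is such a preimage
(`exists_preimage_latticeTorusMap`), and `Ω ∩ (S + Λ) = S` up to a null set because the translates
of `Ω` are almost disjoint. So `∫_S f = 0` for all `S`, and `f = 0` almost everywhere.
-/

open MeasureTheory Real

/-- The standard symplectic form on `ℝ²`: `σ((x,y),(x',y')) = xy' − yx'`. -/
def symp (w v : ℝ × ℝ) : ℝ := w.1 * v.2 - w.2 * v.1

/-- The dual lattice of `Λ` with respect to the symplectic form: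
`Λ* = {m ∈ ℝ² : σ(m,λ) ∈ ℤ for all λ ∈ Λ}`. -/
def sympDual (Λ : Submodule ℤ (ℝ × ℝ)) : Set (ℝ × ℝ) :=
  {m : ℝ × ℝ | ∀ l ∈ Λ, ∃ k : ℤ, symp m l = k}

/-- The translation operator on `ℂ^(ZMod a)`: `(Tφ)(t) = φ(t+1)`, as a matrix. -/
def transT (a : ℕ) : Matrix (ZMod a) (ZMod a) ℂ :=
  Matrix.of fun t s => if s = t + 1 then 1 else 0

/-- The modulation operator on `ℂ^(ZMod a)`: `(Mφ)(t) = ω^t φ(t)` with `ω = e^{2πi/a}`,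
as a matrix. -/
noncomputable def modM (a : ℕ) : Matrix (ZMod a) (ZMod a) ℂ :=
  Matrix.of fun t s =>
    if s = t then Complex.exp (2 * π * Complex.I / a) ^ (t.val) else 0

/-! ### Integrable functions orthogonal to the continuous functions of a map -/

/-- A real integrable function orthogonal to all `g ∘ ψ`, `g` continuous, has integral zero over
every `ψ⁻¹(E)`: the images under `ψ` of the measures `f⁺ μ` and `f⁻ μ` agree. -/
lemma setIntegral_preimage_eq_zero_of_real {X Y : Type*} [MeasurableSpace X] {μ : Measure X}
    [TopologicalSpace Y] [HasOuterApproxClosed Y] [MeasurableSpace Y] [BorelSpace Y]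
    {ψ : X → Y} (hψ : Measurable ψ) {f : X → ℝ} (hf : Integrable f μ)
    (h : ∀ g : BoundedContinuousFunction Y ℝ, ∫ x, g (ψ x) * f x ∂μ = 0)
    {E : Set Y} (hE : MeasurableSet E) : ∫ x in ψ ⁻¹' E, f x ∂μ = 0 := by
  have key : (μ.withDensity fun x => ENNReal.ofReal (f x)).map ψ =
      (μ.withDensity fun x => ENNReal.ofReal (-f x)).map ψ := by
    have : IsFiniteMeasure (μ.withDensity fun x => ENNReal.ofReal (f x)) :=
      isFiniteMeasure_withDensity_ofReal hf.2
    have : IsFiniteMeasure (μ.withDensity fun x => ENNReal.ofReal (-f x)) :=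
      isFiniteMeasure_withDensity_ofReal hf.neg.2
    apply ext_of_forall_integral_eq_of_IsFiniteMeasure
    intro g
    have hgm : Measurable g := g.continuous.measurable
    have hint : ∀ u : X → ℝ, Integrable u μ → Integrable (fun x => u x * g (ψ x)) μ := by
      intro u hu
      refine hu.mul_bdd (c := ‖g‖) (hgm.comp hψ).aestronglyMeasurable ?_
      exact Filter.Eventually.of_forall fun x => g.norm_coe_le_norm _
    rw [integral_map hψ.aemeasurable hgm.aestronglyMeasurable,
      integral_map hψ.aemeasurable hgm.aestronglyMeasurable,
      integral_withDensity_eq_integral_toReal_smul₀ hf.aemeasurable.ennreal_ofReal (by simp),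
      integral_withDensity_eq_integral_toReal_smul₀ (f := fun x => ENNReal.ofReal (-f x))
        hf.neg.aemeasurable.ennreal_ofReal (by simp),
      ← sub_eq_zero]
    simp only [ENNReal.toReal_ofReal', smul_eq_mul]
    rw [← integral_sub (hint _ hf.pos_part) (hint _ hf.neg_part)]
    refine Eq.trans ?_ (h g)
    refine integral_congr_ae (Filter.Eventually.of_forall fun x => ?_)
    rcases le_total (f x) 0 with h0 | h0
    · simp [h0, mul_comm]
    · simp [h0, mul_comm]
  have hE' := congrArg (fun ν : Measure Y => ν E) key
  simp only [Measure.map_apply hψ hE, withDensity_apply _ (hψ hE)] at hE'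
  rw [integral_eq_lintegral_pos_part_sub_lintegral_neg_part hf.integrableOn, hE', sub_self]

lemma setIntegral_preimage_eq_zero {X Y : Type*} [MeasurableSpace X] {μ : Measure X}
    [TopologicalSpace Y] [HasOuterApproxClosed Y] [MeasurableSpace Y] [BorelSpace Y]
    {ψ : X → Y} (hψ : Measurable ψ) {f : X → ℂ} (hf : Integrable f μ)
    (h : ∀ g : C(Y, ℂ), ∫ x, g (ψ x) * f x ∂μ = 0)
    {E : Set Y} (hE : MeasurableSet E) : ∫ x in ψ ⁻¹' E, f x ∂μ = 0 := by
  have hg : ∀ g : BoundedContinuousFunction Y ℝ, ∫ x, (g (ψ x) : ℂ) * f x ∂μ = 0 := fun g =>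
    h ⟨fun y => (g y : ℂ), Complex.continuous_ofReal.comp g.continuous⟩
  have hint : ∀ g : BoundedContinuousFunction Y ℝ,
      Integrable (fun x => (g (ψ x) : ℂ) * f x) μ := by
    intro g
    refine hf.bdd_mul (c := ‖g‖) ?_ ?_
    · exact (Complex.measurable_ofReal.comp
        (g.continuous.measurable.comp hψ)).aestronglyMeasurable
    · exact Filter.Eventually.of_forall fun x => by
        simpa using g.norm_coe_le_norm (ψ x)
  have hre : ∫ x in ψ ⁻¹' E, (f x).re ∂μ = 0 := by
    refine setIntegral_preimage_eq_zero_of_real hψ hf.re (fun g => ?_) hE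
    have := Complex.reCLM.integral_comp_comm (hint g)
    simpa [hg g] using this
  have him : ∫ x in ψ ⁻¹' E, (f x).im ∂μ = 0 := by
    refine setIntegral_preimage_eq_zero_of_real hψ hf.im (fun g => ?_) hE
    have := Complex.imCLM.integral_comp_comm (hint g)
    simpa [hg g] using this
  have h1 := Complex.reCLM.integral_comp_comm (hf.integrableOn (s := ψ ⁻¹' E))
  have h2 := Complex.imCLM.integral_comp_comm (hf.integrableOn (s := ψ ⁻¹' E))
  simp only [Complex.reCLM_apply, Complex.imCLM_apply] at h1 h2
  apply Complex.ext
  · rw [← h1, hre]; rfl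
  · rw [← h2, him]; rfl

/-! ### The torus of a lattice basis -/

section Torus

variable {ι : Type*} (c : Module.Basis ι ℝ (ℝ × ℝ))

/-- The quotient map `ℝ² → ℝ²/Λ ≅ (ℝ/ℤ)^ι`: the coordinates modulo `1` with respect to a real
basis `c` that generates `Λ` over `ℤ`. -/
noncomputable def latticeTorusMap (w : ℝ × ℝ) : UnitAddTorus ι :=
  fun i => ((c.repr w i : ℝ) : UnitAddCircle)

lemma measurable_latticeTorusMap : Measurable (latticeTorusMap c) :=
  measurable_pi_iff.2 fun i => AddCircle.measurable_mk'.comp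
    (c.coord i).continuous_of_finiteDimensional.measurable

variable [Fintype ι]

/-- The section of `latticeTorusMap c` with values in the half-open parallelepiped of `c`. -/
noncomputable def latticeTorusSection (t : UnitAddTorus ι) : ℝ × ℝ :=
  ∑ i, ((AddCircle.measurableEquivIoc 1 0 (t i) : ℝ)) • c i

lemma measurable_latticeTorusSection : Measurable (latticeTorusSection c) := by
  unfold latticeTorusSection
  refine Finset.measurable_sum _ fun i _ => ?_
  refine Measurable.smul_const ?_ _
  exact measurable_subtype_coe.comp
    ((AddCircle.measurableEquivIoc 1 0).measurable.comp (measurable_pi_apply i))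

lemma sub_latticeTorusSection_mem (w : ℝ × ℝ) :
    w - latticeTorusSection c (latticeTorusMap c w) ∈ Submodule.span ℤ (Set.range c) := by
  rw [c.mem_span_iff_repr_mem ℤ]
  intro i
  have h1 : c.repr (latticeTorusSection c (latticeTorusMap c w)) i =
      (AddCircle.measurableEquivIoc 1 0 (latticeTorusMap c w i) : ℝ) := by
    unfold latticeTorusSection
    rw [c.repr_sum_self]
  have h2 : (((AddCircle.measurableEquivIoc 1 0 (latticeTorusMap c w i) : ℝ)) : UnitAddCircle) =
      latticeTorusMap c w i :=
    (AddCircle.measurableEquivIoc (1 : ℝ) 0).symm_apply_apply (latticeTorusMap c w i)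
  rw [map_sub, Finsupp.sub_apply, h1]
  have h3 : ((c.repr w i - (AddCircle.measurableEquivIoc 1 0 (latticeTorusMap c w i) : ℝ) : ℝ) :
      UnitAddCircle) = 0 := by
    rw [AddCircle.coe_sub, h2]
    exact sub_self _
  obtain ⟨n, hn⟩ := AddCircle.coe_eq_zero_iff (1 : ℝ) |>.1 h3
  exact ⟨n, by simpa using hn⟩

/-- Every `Λ`-invariant measurable set is pulled back from a measurable set of the torus. -/
lemma exists_preimage_latticeTorusMap {U : Set (ℝ × ℝ)} (hU : MeasurableSet U)
    (hinv : ∀ l ∈ Submodule.span ℤ (Set.range c), ∀ w ∈ U, l + w ∈ U) :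
    ∃ E : Set (UnitAddTorus ι), MeasurableSet E ∧ latticeTorusMap c ⁻¹' E = U := by
  refine ⟨latticeTorusSection c ⁻¹' U, measurable_latticeTorusSection c hU, ?_⟩
  ext w
  have hw := sub_latticeTorusSection_mem c w
  constructor
  · intro h
    have := hinv _ hw _ h
    rwa [sub_add_cancel] at this
  · intro h
    have := hinv _ (neg_mem hw) _ h
    rwa [neg_sub, sub_add_cancel] at this

lemma mFourier_latticeTorusMap (n : ι → ℤ) (w : ℝ × ℝ) :
    UnitAddTorus.mFourier n (latticeTorusMap c w) =
      Complex.exp (2 * π * Complex.I * ((∑ i, (n i : ℝ) * c.repr w i : ℝ) : ℂ)) := by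
  simp only [UnitAddTorus.mFourier, ContinuousMap.coe_mk, latticeTorusMap, fourier_coe_apply]
  rw [← Complex.exp_sum]
  congr 1
  push_cast
  rw [Finset.mul_sum]
  refine Finset.sum_congr rfl fun i _ => ?_
  simp only [div_one]
  ring

/-- Each character of the torus, pulled back to `ℝ²`, is `w ↦ e^{−2πi σ(w,m)}` for an `m` in the
symplectic dual lattice. -/
lemma exists_mem_sympDual (n : ι → ℤ) :
    ∃ m ∈ sympDual (Submodule.span ℤ (Set.range c)), ∀ w,
      Complex.exp (-(2 * π * Complex.I * symp w m)) =
        UnitAddTorus.mFourier n (latticeTorusMap c w) := by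
  let L : ℝ × ℝ →ₗ[ℝ] ℝ := ∑ i, (n i : ℝ) • c.coord i
  have hL : ∀ w, L w = ∑ i, (n i : ℝ) * c.repr w i := by
    intro w; simp [L]
  have hsymp : ∀ w, symp w (L (0, 1), -L (1, 0)) = -L w := by
    intro w
    have hw : w = w.1 • ((1, 0) : ℝ × ℝ) + w.2 • ((0, 1) : ℝ × ℝ) := by
      ext <;> simp
    conv_rhs => rw [hw, map_add, map_smul, map_smul]
    simp only [symp, smul_eq_mul]
    ring
  refine ⟨(L (0, 1), -L (1, 0)), ?_, fun w => ?_⟩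
  · intro l hl
    have hint : ∀ i, ∃ k : ℤ, (k : ℝ) = c.repr l i := fun i =>
      (c.mem_span_iff_repr_mem ℤ l).1 hl i
    choose k hk using hint
    refine ⟨∑ i, n i * k i, ?_⟩
    have hanti : symp (L (0, 1), -L (1, 0)) l = -symp l (L (0, 1), -L (1, 0)) := by
      simp only [symp]; ring
    rw [hanti, hsymp, neg_neg, hL]
    push_cast
    simp only [hk]
  · rw [mFourier_latticeTorusMap, hsymp, hL]
    congr 1
    push_cast
    ring

end Torus

/-! ### Uniqueness of Fourier coefficients on a fundamental domain -/

lemma integral_comp_latticeTorusMap_eq_zero {ι : Type*} [Fintype ι] (c : Module.Basis ι ℝ (ℝ × ℝ))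
    {μ : Measure (ℝ × ℝ)} {f : ℝ × ℝ → ℂ} (hf : Integrable f μ)
    (h : ∀ n, ∫ w, UnitAddTorus.mFourier n (latticeTorusMap c w) * f w ∂μ = 0)
    (g : C(UnitAddTorus ι, ℂ)) : ∫ w, g (latticeTorusMap c w) * f w ∂μ = 0 := by
  have hint : ∀ g : C(UnitAddTorus ι, ℂ), Integrable (fun w => g (latticeTorusMap c w) * f w) μ := by
    intro g
    refine hf.bdd_mul (c := ‖g‖) ?_ ?_
    · exact (g.continuous.measurable.comp (measurable_latticeTorusMap c)).aestronglyMeasurable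
    · exact Filter.Eventually.of_forall fun x => g.norm_coe_le_norm _
  let Φ : C(UnitAddTorus ι, ℂ) →ₗ[ℂ] ℂ :=
    { toFun := fun g => ∫ w, g (latticeTorusMap c w) * f w ∂μ
      map_add' := fun g₁ g₂ => by
        rw [← integral_add (hint g₁) (hint g₂)]
        simp only [ContinuousMap.add_apply, add_mul]
      map_smul' := fun r g => by
        rw [RingHom.id_apply, smul_eq_mul, ← integral_const_mul]
        simp only [ContinuousMap.smul_apply, smul_eq_mul, mul_assoc] }
  let Ψ : C(UnitAddTorus ι, ℂ) →L[ℂ] ℂ := Φ.mkContinuous (∫ w, ‖f w‖ ∂μ) fun g => by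
    change ‖∫ w, g (latticeTorusMap c w) * f w ∂μ‖ ≤ _
    rw [mul_comm, ← integral_const_mul]
    refine norm_integral_le_of_norm_le (hf.norm.const_mul _) ?_
    refine Filter.Eventually.of_forall fun w => ?_
    rw [norm_mul]
    exact mul_le_mul_of_nonneg_right (g.norm_coe_le_norm _) (norm_nonneg _)
  have hle : (Submodule.span ℂ (Set.range (UnitAddTorus.mFourier (d := ι)))).topologicalClosure ≤
      Ψ.ker := by
    refine Submodule.topologicalClosure_minimal _ ?_ Ψ.isClosed_ker
    rw [Submodule.span_le]
    rintro _ ⟨n, rfl⟩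
    exact h n
  rw [UnitAddTorus.span_mFourier_closure_eq_top] at hle
  exact hle (Submodule.mem_top (x := g))

open scoped Pointwise in
/-- The scalar case: an integrable function on a fundamental domain `Ω` is determined by its
Fourier coefficients. A measurable `S ⊆ Ω` agrees up to a null set with the intersection of `Ω`
with the invariant set `S + Λ`, so the integral of `f` over `S` vanishes. -/
lemma scalar_coefficients_determine (Λ : Submodule ℤ (ℝ × ℝ)) [DiscreteTopology Λ]
    [IsZLattice ℝ Λ] (Ω : Set (ℝ × ℝ)) (hΩmeas : MeasurableSet Ω)
    (hΩ : IsAddFundamentalDomain Λ Ω volume) (f : ℝ × ℝ → ℂ) (hf : IntegrableOn f Ω volume)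
    (hvanish : ∀ m ∈ sympDual Λ,
      ∫ w in Ω, Complex.exp (-(2 * π * Complex.I * symp w m)) * f w = 0) :
    ∀ᵐ w ∂(volume.restrict Ω), f w = 0 := by
  have : Module.Finite ℤ Λ := ZLattice.module_finite ℝ Λ
  have : Module.Free ℤ Λ := ZLattice.module_free ℝ Λ
  let c := (Module.Free.chooseBasis ℤ Λ).ofZLatticeBasis ℝ Λ
  have hc : Submodule.span ℤ (Set.range c) = Λ :=
    (Module.Free.chooseBasis ℤ Λ).ofZLatticeBasis_span ℝ
  have hcont := integral_comp_latticeTorusMap_eq_zero c hf (fun n => by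
    obtain ⟨m, hm, hmn⟩ := exists_mem_sympDual c n
    rw [hc] at hm
    simpa only [hmn] using hvanish m hm)
  refine Integrable.ae_eq_zero_of_forall_setIntegral_eq_zero hf fun S₀ hS₀ _ => ?_
  rw [Measure.restrict_restrict hS₀]
  set S := S₀ ∩ Ω with hSdef
  have hS : MeasurableSet S := hS₀.inter hΩmeas
  let U : Set (ℝ × ℝ) := ⋃ l : Λ, l +ᵥ S
  have hU : MeasurableSet U := MeasurableSet.iUnion fun l => hS.const_vadd l
  obtain ⟨E, hE, hEU⟩ := exists_preimage_latticeTorusMap c hU (by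
    intro l hl w hw
    rw [hc] at hl
    obtain ⟨k, hk⟩ := Set.mem_iUnion.1 hw
    refine Set.mem_iUnion.2 ⟨⟨l, hl⟩ + k, ?_⟩
    rw [add_vadd]
    exact Set.vadd_mem_vadd_set hk)
  have hzero := setIntegral_preimage_eq_zero (measurable_latticeTorusMap c) hf hcont hE
  rw [hEU, Measure.restrict_restrict hU] at hzero
  rw [← hzero]
  refine setIntegral_congr_set ?_
  have hsub : S ⊆ U ∩ Ω := fun w hw =>
    ⟨Set.mem_iUnion.2 ⟨0, by simpa using hw⟩, hw.2⟩
  refine Filter.EventuallyLE.antisymm hsub.eventuallyLE ?_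
  rw [ae_le_set]
  have hnull : volume (⋃ l : {l : Λ // l ≠ 0}, (((l : Λ) +ᵥ Ω) ∩ Ω)) = 0 := by
    rw [measure_iUnion_null_iff]
    intro l
    have := hΩ.aedisjoint l.2
    simpa [Function.onFun, AEDisjoint] using this
  refine measure_mono_null ?_ hnull
  rintro w ⟨⟨hwU, hwΩ⟩, hwS⟩
  obtain ⟨l, hl⟩ := Set.mem_iUnion.1 hwU
  have hl0 : l ≠ 0 := by
    rintro rfl
    exact hwS (by simpa using hl)
  exact Set.mem_iUnion.2 ⟨⟨l, hl0⟩, Set.vadd_set_mono Set.inter_subset_right hl, hwΩ⟩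

/-! ### The matrices `Tʲ Mᵏ` span -/

lemma transT_pow_apply (a : ℕ) [NeZero a] (n : ℕ) (t s : ZMod a) :
    (transT a ^ n) t s = if s = t + n then 1 else 0 := by
  induction n generalizing t s with
  | zero => simp [Matrix.one_apply, eq_comm]
  | succ n ih =>
    rw [pow_succ, Matrix.mul_apply]
    simp only [ih, ite_mul, one_mul, zero_mul, Finset.sum_ite_eq',
      Finset.mem_univ, if_true]
    simp [transT, add_assoc]

lemma modM_eq_diagonal (a : ℕ) [NeZero a] :
    modM a = Matrix.diagonal fun t : ZMod a => ZMod.stdAddChar t := by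
  ext t s
  rw [Matrix.diagonal_apply]
  simp only [modM, Matrix.of_apply, eq_comm (a := s)]
  refine if_congr Iff.rfl ?_ rfl
  rw [ZMod.stdAddChar_apply, ZMod.toCircle_apply, ← Complex.exp_nat_mul]
  congr 1
  ring

lemma trace_mul_star_apply (a : ℕ) [NeZero a] (A : Matrix (ZMod a) (ZMod a) ℂ) (j k : ZMod a) :
    (A * star (transT a ^ j.val * modM a ^ k.val)).trace =
      ∑ s, ZMod.stdAddChar (-(s * k)) * A (s - j) s := by
  have hX : ∀ t s, (transT a ^ j.val * modM a ^ k.val) t s =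
      if t = s - j then ZMod.stdAddChar (s * k) else 0 := by
    intro t s
    rw [modM_eq_diagonal, Matrix.diagonal_pow, Matrix.mul_diagonal, transT_pow_apply]
    simp only [Pi.pow_apply, ite_mul, one_mul, zero_mul, ZMod.natCast_val, ZMod.cast_id', id_eq]
    refine if_congr ⟨fun h => by rw [h]; ring, fun h => by rw [h]; ring⟩ ?_ rfl
    rw [← AddChar.map_nsmul_eq_pow, nsmul_eq_mul, ZMod.natCast_val, ZMod.cast_id', id_eq, mul_comm]
  simp only [Matrix.trace, Matrix.diag_apply, Matrix.mul_apply (M := A), Matrix.star_apply, hX]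
  rw [Finset.sum_comm]
  refine Finset.sum_congr rfl fun s _ => ?_
  rw [Finset.sum_eq_single (s - j)]
  · rw [if_pos rfl, AddChar.map_neg_eq_conj, mul_comm]; rfl
  · intro t _ ht
    rw [if_neg ht, star_zero, mul_zero]
  · simp

/-- The traces against `(Tʲ Mᵏ)*` with `j` fixed form the discrete Fourier transform of the `j`-th
generalized diagonal of `A`. -/
lemma eq_zero_of_trace_mul_star_eq_zero (a : ℕ) [NeZero a] (A : Matrix (ZMod a) (ZMod a) ℂ)
    (h : ∀ j k : ZMod a, (A * star (transT a ^ j.val * modM a ^ k.val)).trace = 0) : A = 0 := by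
  ext t s
  have hdft : ZMod.dft (fun s' : ZMod a => A (s' - (s - t)) s') = 0 := by
    funext k
    rw [ZMod.dft_apply, Pi.zero_apply]
    simpa only [smul_eq_mul, trace_mul_star_apply] using h (s - t) k
  have := congrFun ((LinearEquiv.map_eq_zero_iff _).1 hdft) s
  simpa using this

/-- If `F : Ω → M_a(ℂ)` is (Bochner, i.e. entrywise) integrable on a fundamental domain `Ω`
of a lattice `Λ ⊆ ℝ²`, and all its Fourier–Wigner coefficients
`∫_Ω e^{−2πi σ(w,m)} tr(F(w) (Tʲ Mᵏ)*) dw` (`m ∈ Λ*`, `(j,k) ∈ (ZMod a)²`) vanish,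
then `F = 0` a.e. on `Ω`. -/
theorem fourierWigner_coefficients_determine
    (a : ℕ) [NeZero a]
    (Λ : Submodule ℤ (ℝ × ℝ)) [DiscreteTopology Λ] [IsZLattice ℝ Λ]
    (Ω : Set (ℝ × ℝ)) (hΩmeas : MeasurableSet Ω)
    (hΩ : IsAddFundamentalDomain Λ Ω volume)
    (F : ℝ × ℝ → Matrix (ZMod a) (ZMod a) ℂ)
    (hF : ∀ i j : ZMod a, IntegrableOn (fun w => F w i j) Ω volume)
    (hvanish : ∀ m ∈ sympDual Λ, ∀ j k : ZMod a,
      ∫ w in Ω, Complex.exp (-(2 * π * Complex.I * symp w m)) *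
        (F w * star (transT a ^ j.val * modM a ^ k.val)).trace = 0) :
    ∀ᵐ w ∂(volume.restrict Ω), F w = 0 := by
  have key : ∀ j k : ZMod a, ∀ᵐ w ∂(volume.restrict Ω),
      (F w * star (transT a ^ j.val * modM a ^ k.val)).trace = 0 := by
    intro j k
    refine scalar_coefficients_determine Λ Ω hΩmeas hΩ _ ?_ (fun m hm => hvanish m hm j k)
    simp only [trace_mul_star_apply]
    exact integrable_finsetSum _ fun s _ => (hF _ _).const_mul _
  have hall := ae_all_iff.2 fun j => ae_all_iff.2 fun k => key j k
  filter_upwards [hall] with w hw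
  exact eq_zero_of_trace_mul_star_eq_zero a (F w) hw
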